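/- Equip Λ²ℤ⁴ with the symmetric bilinear form b(x,y) := x ∧ y ∈ Λ⁴ℤ⁴ ≅ ℤ, which makes it an even unimodular lattice of signature (3,3) isometric to U³. Then the image of SL₄(ℤ) under the second exterior power homomorphism λ : SL₄(ℤ) → O(Λ²ℤ⁴, b), λ(ψ) = Λ²ψ, is exactly SO^+(Λ²ℤ⁴, b). -/

import Mathlib

open Matrix

/-- The ℝ-bilinear extension of the integral bilinear form with Gram matrix `M`. -/
def bilinR {ι : Type*} [Fintype ι] (M : Matrix ι ι ℤ) (x y : ι → ℝ) : ℝ :=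
  x ⬝ᵥ ((M.map (Int.cast : ℤ → ℝ)) *ᵥ y)

/-- `w` is a tuple of vectors of `L ⊗ ℝ` spanning a maximal positive definite subspace:
its Gram matrix is positive definite and no longer tuple has positive definite Gram matrix. -/
def IsMaxPosTuple {ι : Type*} [Fintype ι] (M : Matrix ι ι ℤ) {k : ℕ}
    (w : Fin k → ι → ℝ) : Prop :=
  (Matrix.of fun i j => bilinR M (w i) (w j)).PosDef ∧
    ∀ w' : Fin (k + 1) → ι → ℝ,
      ¬ (Matrix.of fun i j => bilinR M (w' i) (w' j)).PosDef

/-- `g` preserves the orientation of the positive cone of the lattice with Gram matrix `M`: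
for every basis `w` of a maximal positive definite subspace `W` of `L ⊗ ℝ`, the determinant of
the matrix `(B(wᵢ, g wⱼ))` (which equals, up to the positive factor `det (Gram w)`, the
determinant of the orthogonal projection of `g|_W` back to `W`) is positive. -/
def OrientPres {ι : Type*} [Fintype ι] (M : Matrix ι ι ℤ) (g : Matrix ι ι ℤ) : Prop :=
  ∀ (k : ℕ) (w : Fin k → ι → ℝ), IsMaxPosTuple M w →
    0 < (Matrix.of fun i j : Fin k =>
          bilinR M (w i) ((g.map (Int.cast : ℤ → ℝ)) *ᵥ w j)).det

/-- `g` is an isometry of the lattice with Gram matrix `M`. -/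
def IsIsometry {ι : Type*} [Fintype ι] (M : Matrix ι ι ℤ) (g : Matrix ι ι ℤ) : Prop :=
  gᵀ * M * g = M

/-- A vector of a lattice is primitive if it is divisible only by units. -/
def IsPrimitiveVec {ι : Type*} (l : ι → ℤ) : Prop :=
  ∀ (c : ℤ) (x : ι → ℤ), l = c • x → IsUnit c

/-- First members of the six index pairs `(0,1),(0,2),(0,3),(1,2),(1,3),(2,3)` indexing the
standard basis `eᵢ ∧ eⱼ` (i < j) of `Λ²ℤ⁴`. -/
def pfst : Fin 6 → Fin 4 := ![0, 0, 0, 1, 1, 2]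

/-- Second members of the six index pairs indexing the standard basis of `Λ²ℤ⁴`. -/
def psnd : Fin 6 → Fin 4 := ![1, 2, 3, 2, 3, 3]

/-- The second exterior power `Λ²ψ` of a `4×4` integral matrix, in the standard basis
`eᵢ ∧ eⱼ` (i < j) of `Λ²ℤ⁴`: its entries are the `2×2` minors of `ψ`. -/
def lam2 (ψ : Matrix (Fin 4) (Fin 4) ℤ) : Matrix (Fin 6) (Fin 6) ℤ :=
  Matrix.of fun I J =>
    ψ (pfst I) (pfst J) * ψ (psnd I) (psnd J) - ψ (pfst I) (psnd J) * ψ (psnd I) (pfst J)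

/-- The Gram matrix of the symmetric bilinear form `b(x,y) = x ∧ y ∈ Λ⁴ℤ⁴ ≅ ℤ` on `Λ²ℤ⁴`,
in the standard basis `eᵢ ∧ eⱼ` (i < j), where `Λ⁴ℤ⁴` is identified with `ℤ` via the
generator `e₀ ∧ e₁ ∧ e₂ ∧ e₃`. -/
def G6 : Matrix (Fin 6) (Fin 6) ℤ :=
  !![0,0,0,0,0,1;
     0,0,0,0,-1,0;
     0,0,0,1,0,0;
     0,0,1,0,0,0;
     0,-1,0,0,0,0;
     1,0,0,0,0,0]


/-! ### Part A: the exterior square over a commutative ring -/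

def lamR {R : Type*} [CommRing R] (ψ : Matrix (Fin 4) (Fin 4) R) : Matrix (Fin 6) (Fin 6) R :=
  Matrix.of fun I J =>
    ψ (pfst I) (pfst J) * ψ (psnd I) (psnd J) - ψ (pfst I) (psnd J) * ψ (psnd I) (pfst J)

def GR (R : Type*) [CommRing R] : Matrix (Fin 6) (Fin 6) R := G6.map (Int.cast : ℤ → R)

theorem lamR_mul {R : Type*} [CommRing R] (A B : Matrix (Fin 4) (Fin 4) R) :
    lamR (A * B) = lamR A * lamR B := by
  ext I J
  simp only [lamR, Matrix.mul_apply, Matrix.of_apply, Fin.sum_univ_four, Fin.sum_univ_six,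
    pfst, psnd]
  generalize (![0, 0, 0, 1, 1, 2] : Fin 6 → Fin 4) I = i
  generalize (![1, 2, 3, 2, 3, 3] : Fin 6 → Fin 4) I = j
  generalize (![0, 0, 0, 1, 1, 2] : Fin 6 → Fin 4) J = k
  generalize (![1, 2, 3, 2, 3, 3] : Fin 6 → Fin 4) J = l
  simp only [Matrix.cons_val]
  ring

theorem lamR_one {R : Type*} [CommRing R] : lamR (1 : Matrix (Fin 4) (Fin 4) R) = 1 := by
  ext I J
  fin_cases I <;> fin_cases J <;> simp [lamR, pfst, psnd, Matrix.one_apply]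

theorem GR_eq (R : Type*) [CommRing R] : GR R = !![0,0,0,0,0,1;
     0,0,0,0,-1,0;
     0,0,0,1,0,0;
     0,0,1,0,0,0;
     0,-1,0,0,0,0;
     1,0,0,0,0,0] := by
  ext I J
  fin_cases I <;> fin_cases J <;> simp [GR, G6]

theorem det4 {R : Type*} [CommRing R] (A : Matrix (Fin 4) (Fin 4) R) : A.det =
    (A 0 0 * A 1 1 - A 0 1 * A 1 0) * (A 2 2 * A 3 3 - A 2 3 * A 3 2)
    - (A 0 0 * A 1 2 - A 0 2 * A 1 0) * (A 2 1 * A 3 3 - A 2 3 * A 3 1)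
    + (A 0 0 * A 1 3 - A 0 3 * A 1 0) * (A 2 1 * A 3 2 - A 2 2 * A 3 1)
    + (A 0 1 * A 1 2 - A 0 2 * A 1 1) * (A 2 0 * A 3 3 - A 2 3 * A 3 0)
    - (A 0 1 * A 1 3 - A 0 3 * A 1 1) * (A 2 0 * A 3 2 - A 2 2 * A 3 0)
    + (A 0 2 * A 1 3 - A 0 3 * A 1 2) * (A 2 0 * A 3 1 - A 2 1 * A 3 0) := by
  simp [Matrix.det_succ_row_zero, Fin.sum_univ_succ, Fin.succAbove, Fin.succ]
  ring

theorem lamR_isom {R : Type*} [CommRing R] (A : Matrix (Fin 4) (Fin 4) R) :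
    (lamR A)ᵀ * GR R * lamR A = A.det • GR R := by
  rw [GR_eq, det4]
  ext I J
  simp only [Matrix.mul_apply, Fin.sum_univ_six, Matrix.transpose_apply, Matrix.smul_apply, smul_eq_mul]
  fin_cases I <;> fin_cases J <;> simp [lamR, pfst, psnd] <;> ring

theorem det_isom {g : Matrix (Fin 6) (Fin 6) ℝ} (h : gᵀ * GR ℝ * g = GR ℝ) : g.det * g.det = 1 := by
  have hG : GR ℝ * GR ℝ = 1 := by
    rw [GR_eq]
    ext I J
    fin_cases I <;> fin_cases J <;> simp [Matrix.mul_apply, Fin.sum_univ_six]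
  have h1 := congrArg Matrix.det h
  have h2 := congrArg Matrix.det hG
  simp only [Matrix.det_mul, Matrix.det_transpose, Matrix.det_one] at h1 h2
  have h3 := congrArg (· * (GR ℝ).det) h1
  linear_combination h3 - (g.det * g.det - 1) * h2

/-! ### Part B: orientation -/

def pp (x : Fin 6 → ℝ) : Fin 3 → ℝ := ![x 0 + x 5, x 1 - x 4, x 2 + x 3]
def nn (x : Fin 6 → ℝ) : Fin 3 → ℝ := ![x 0 - x 5, x 1 + x 4, x 2 - x 3]
def Pm {k : ℕ} (u : Fin k → Fin 6 → ℝ) : Matrix (Fin k) (Fin 3) ℝ := Matrix.of fun i => pp (u i)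
def Nm {k : ℕ} (u : Fin k → Fin 6 → ℝ) : Matrix (Fin k) (Fin 3) ℝ := Matrix.of fun i => nn (u i)

theorem bil_eq (x y : Fin 6 → ℝ) : bilinR G6 x y = (pp x ⬝ᵥ pp y - nn x ⬝ᵥ nn y) / 2 := by
  change x ⬝ᵥ (GR ℝ *ᵥ y) = _
  rw [GR_eq]
  simp [dotProduct, Matrix.mulVec, Fin.sum_univ_six, Fin.sum_univ_three, pp, nn]
  ring

theorem bil_mat {k : ℕ} (u v : Fin k → Fin 6 → ℝ) :
    (Matrix.of fun i j => bilinR G6 (u i) (v j)) =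
      (1/2 : ℝ) • (Pm u * (Pm v)ᵀ - Nm u * (Nm v)ᵀ) := by
  ext i j
  simp only [Matrix.of_apply, bil_eq, Matrix.smul_apply, Matrix.sub_apply, Matrix.mul_apply,
    dotProduct, Pm, Nm, Matrix.transpose_apply, smul_eq_mul]
  ring

def Dom {k : ℕ} (P N : Matrix (Fin k) (Fin 3) ℝ) : Prop :=
  ∀ c : Fin k → ℝ, c ≠ 0 → (c ᵥ* N) ⬝ᵥ (c ᵥ* N) < (c ᵥ* P) ⬝ᵥ (c ᵥ* P)

theorem dom_of_posDef {k : ℕ} (u : Fin k → Fin 6 → ℝ)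
    (h : (Matrix.of fun i j => bilinR G6 (u i) (u j)).PosDef) : Dom (Pm u) (Nm u) := by
  intro c hc
  rw [bil_mat] at h
  have := h.dotProduct_mulVec_pos hc
  simp only [star_trivial, Matrix.smul_mulVec, Matrix.sub_mulVec, dotProduct_smul, dotProduct_sub,
    ← Matrix.mulVec_mulVec, Matrix.dotProduct_mulVec, Matrix.mulVec_transpose, smul_eq_mul] at this
  simp only [← Matrix.dotProduct_mulVec, Matrix.mulVec_transpose] at this
  simp only [Matrix.dotProduct_mulVec] at this
  linarith

theorem dot_self_nonneg' {n : ℕ} (x : Fin n → ℝ) : 0 ≤ x ⬝ᵥ x := by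
  simp only [dotProduct]
  exact Finset.sum_nonneg fun i _ => mul_self_nonneg _

theorem dom_inj {k : ℕ} {P N : Matrix (Fin k) (Fin 3) ℝ} (h : Dom P N) (c : Fin k → ℝ)
    (hc : c ᵥ* P = 0) : c = 0 := by
  by_contra h0
  have := h c h0
  rw [hc] at this
  have h2 := dot_self_nonneg' (c ᵥ* N)
  simp at this
  linarith

theorem dom_le {k : ℕ} {P N : Matrix (Fin k) (Fin 3) ℝ} (h : Dom P N) : k ≤ 3 := by
  have : Function.Injective (Matrix.vecMulLinear P) := by
    rw [injective_iff_map_eq_zero]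
    intro c hc
    exact dom_inj h c (by simpa using hc)
  simpa using LinearMap.finrank_le_finrank_of_injective this

theorem dom_det {P N : Matrix (Fin 3) (Fin 3) ℝ} (h : Dom P N) : P.det ≠ 0 := by
  intro h0
  obtain ⟨c, hc, hc0⟩ := Matrix.exists_vecMul_eq_zero_iff.mpr h0
  exact hc (dom_inj h c hc0)

theorem dom_path {P N Q M : Matrix (Fin 3) (Fin 3) ℝ} (h : Dom P N) (h' : Dom Q M) (t : ℝ)
    (ht0 : 0 ≤ t) (ht1 : t ≤ 1) : (P * Qᵀ - t • (N * Mᵀ)).det ≠ 0 := by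
  intro h0
  obtain ⟨c, hc, hc0⟩ := Matrix.exists_vecMul_eq_zero_iff.mpr h0
  have hQ : IsUnit Q.det := (dom_det h').isUnit
  set d := (c ᵥ* P) ᵥ* Q⁻¹ with hd
  have hdQ : d ᵥ* Q = c ᵥ* P := by
    rw [hd, Matrix.vecMul_vecMul, Matrix.nonsing_inv_mul _ hQ, Matrix.vecMul_one]
  have h1 := h c hc
  have h1' := dot_self_nonneg' (c ᵥ* N)
  have hd0 : d ≠ 0 := by
    intro hd0
    rw [hd0, Matrix.zero_vecMul] at hdQ
    rw [← hdQ] at h1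
    simp at h1
    linarith
  have h2 := h' d hd0
  rw [hdQ] at h2
  have h3 : (c ᵥ* P) ⬝ᵥ (c ᵥ* P) = t * ((c ᵥ* N) ⬝ᵥ (d ᵥ* M)) := by
    have := congrArg (· ⬝ᵥ d) hc0
    simp only [Matrix.vecMul_sub, Matrix.vecMul_smul, sub_dotProduct, smul_dotProduct,
      zero_dotProduct, ← Matrix.vecMul_vecMul, smul_eq_mul, Matrix.vecMul_transpose] at this
    rw [dotProduct_comm (Q *ᵥ _), dotProduct_comm (M *ᵥ _),
      Matrix.dotProduct_mulVec, Matrix.dotProduct_mulVec, hdQ,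
      dotProduct_comm (d ᵥ* M)] at this
    linarith
  have h4 : 2 * ((c ᵥ* N) ⬝ᵥ (d ᵥ* M)) ≤ (c ᵥ* N) ⬝ᵥ (c ᵥ* N) + (d ᵥ* M) ⬝ᵥ (d ᵥ* M) := by
    have := dot_self_nonneg' (c ᵥ* N - d ᵥ* M)
    simp only [sub_dotProduct, dotProduct_sub] at this
    rw [dotProduct_comm (d ᵥ* M) (c ᵥ* N)] at this
    linarith
  nlinarith

theorem dom_pos {P N Q M : Matrix (Fin 3) (Fin 3) ℝ} (h : Dom P N) (h' : Dom Q M) :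
    0 < P.det * Q.det * (P * Qᵀ - N * Mᵀ).det := by
  have hP := dom_det h
  have hQ := dom_det h'
  let f : ℝ → ℝ := fun t => P.det * Q.det * (P * Qᵀ - t • (N * Mᵀ)).det
  have hf : Continuous f := by
    refine continuous_const.mul (Continuous.matrix_det ?_)
    fun_prop
  have hne : ∀ t ∈ Set.Icc (0:ℝ) 1, f t ≠ 0 := fun t ht =>
    mul_ne_zero (mul_ne_zero hP hQ) (dom_path h h' t ht.1 ht.2)
  have h0 : 0 < f 0 := by
    have : f 0 = (P.det * Q.det)^2 := by simp [f]; ring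
    rw [this]; positivity
  have h1 : 0 < f 1 := by
    by_contra hcon
    push Not at hcon
    have := intermediate_value_Icc' (zero_le_one' ℝ) hf.continuousOn ⟨hcon, h0.le⟩
    obtain ⟨t, ht, ht2⟩ := this
    exact hne t ht ht2
  simpa [f] using h1

abbrev Pos (u : Fin 3 → Fin 6 → ℝ) : Prop :=
  (Matrix.of fun i j => bilinR G6 (u i) (u j)).PosDef

theorem pos_pos {u v : Fin 3 → Fin 6 → ℝ} (hu : Pos u) (hv : Pos v) :
    0 < (Pm u).det * (Pm v).det * (Matrix.of fun i j => bilinR G6 (u i) (v j)).det := by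
  have := dom_pos (dom_of_posDef u hu) (dom_of_posDef v hv)
  rw [bil_mat, Matrix.det_smul]
  simp only [Fintype.card_fin]
  nlinarith

/-- action on tuples -/
def act (g : Matrix (Fin 6) (Fin 6) ℝ) (u : Fin 3 → Fin 6 → ℝ) : Fin 3 → Fin 6 → ℝ :=
  fun i => g *ᵥ u i

theorem act_mul (g h : Matrix (Fin 6) (Fin 6) ℝ) (u) : act (g * h) u = act g (act h u) := by
  funext i
  simp [act, Matrix.mulVec_mulVec]

def Isom (g : Matrix (Fin 6) (Fin 6) ℝ) : Prop := gᵀ * GR ℝ * g = GR ℝ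

theorem Isom.mul {g h : Matrix (Fin 6) (Fin 6) ℝ} (hg : Isom g) (hh : Isom h) : Isom (g * h) := by
  unfold Isom at *
  rw [Matrix.transpose_mul]
  calc hᵀ * gᵀ * GR ℝ * (g * h) = hᵀ * (gᵀ * GR ℝ * g) * h := by simp only [Matrix.mul_assoc]
    _ = _ := by rw [hg, hh]

theorem Isom.bil {g : Matrix (Fin 6) (Fin 6) ℝ} (hg : Isom g) (x y : Fin 6 → ℝ) :
    bilinR G6 (g *ᵥ x) (g *ᵥ y) = bilinR G6 x y := by
  change (g *ᵥ x) ⬝ᵥ (GR ℝ *ᵥ (g *ᵥ y)) = x ⬝ᵥ (GR ℝ *ᵥ y)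
  conv_rhs => rw [← hg]
  rw [dotProduct_comm (g *ᵥ x), Matrix.dotProduct_mulVec, ← Matrix.mulVec_transpose,
    dotProduct_comm]
  simp only [Matrix.mulVec_mulVec, Matrix.mul_assoc]

theorem Isom.pos {g : Matrix (Fin 6) (Fin 6) ℝ} (hg : Isom g) {u} (hu : Pos u) : Pos (act g u) := by
  unfold Pos
  simp only [act, hg.bil]
  exact hu

def dP (u : Fin 3 → Fin 6 → ℝ) : ℝ := (Pm u).det

theorem Isom.char {g : Matrix (Fin 6) (Fin 6) ℝ} (hg : Isom g) {u v} (hu : Pos u) (hv : Pos v) :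
    0 < (dP u * dP (act g u)) * (dP v * dP (act g v)) := by
  have h1 := pos_pos hu hv
  have h2 := pos_pos (hg.pos hu) (hg.pos hv)
  simp only [act, hg.bil] at h2
  have h3 := mul_pos h1 h2
  set D := (Matrix.of fun i j => bilinR G6 (u i) (v j)).det
  have h4 : 0 < D * D := by
    rcases eq_or_ne D 0 with h | h
    · rw [h] at h1; simp at h1
    · exact mul_self_pos.mpr h
  have : 0 < ((dP u * dP (act g u)) * (dP v * dP (act g v))) * (D * D) := by
    simp only [dP, act]
    calc 0 < _ := h3
      _ = _ := by ring
  exact pos_of_mul_pos_left this h4.le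

def OP (g : Matrix (Fin 6) (Fin 6) ℝ) : Prop := ∀ u, Pos u → 0 < dP u * dP (act g u)

theorem OP_of {g : Matrix (Fin 6) (Fin 6) ℝ} (hg : Isom g) {u} (hu : Pos u)
    (h : 0 < dP u * dP (act g u)) : OP g := fun v hv =>
  pos_of_mul_pos_right (hg.char hu hv) h.le

theorem dP_ne {u} (hu : Pos u) : dP u ≠ 0 := dom_det (dom_of_posDef u hu)

theorem OP_mul {g h : Matrix (Fin 6) (Fin 6) ℝ} (hh : Isom h) (h1 : OP g) (h2 : OP h) :
    OP (g * h) := by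
  intro u hu
  have a := h2 u hu
  have b := h1 _ (hh.pos hu)
  rw [act_mul]
  have hne := dP_ne (hh.pos hu)
  have : 0 < (dP u * dP (act g (act h u))) * (dP (act h u) * dP (act h u)) := by
    calc 0 < _ := mul_pos a b
      _ = _ := by ring
  exact pos_of_mul_pos_left this (mul_self_nonneg _)

theorem OP_sq {g : Matrix (Fin 6) (Fin 6) ℝ} (hg : Isom g) : OP (g * g) := by
  intro u hu
  have a := hg.char hu (hg.pos hu)
  rw [act_mul]
  have : 0 < (dP u * dP (act g (act g u))) * (dP (act g u) * dP (act g u)) := by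
    calc 0 < _ := a
      _ = _ := by ring
  exact pos_of_mul_pos_left this (mul_self_nonneg _)

/-- the standard positive tuple -/
def w0 : Fin 3 → Fin 6 → ℝ := ![![1,0,0,0,0,1], ![0,1,0,0,-1,0], ![0,0,1,1,0,0]]

theorem w0_gram : (Matrix.of fun i j => bilinR G6 (w0 i) (w0 j)) = (2:ℝ) • 1 := by
  ext i j
  simp only [Matrix.of_apply, bil_eq]
  fin_cases i <;> fin_cases j <;> simp [w0, pp, nn, dotProduct, Fin.sum_univ_three] <;> norm_num

theorem w0_pos : Pos w0 := by
  unfold Pos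
  rw [w0_gram]
  exact Matrix.PosDef.one.smul (by norm_num)

theorem max_eq {k : ℕ} {w : Fin k → Fin 6 → ℝ} (h : IsMaxPosTuple G6 w) : k = 3 := by
  obtain ⟨h1, h2⟩ := h
  have hle := dom_le (dom_of_posDef w h1)
  by_contra hne
  have hlt : k + 1 ≤ 3 := by omega
  apply h2 (fun i => w0 (Fin.castLE hlt i))
  have := w0_pos.submatrix (Fin.castLE_injective hlt)
  exact this

theorem pos_max {w : Fin 3 → Fin 6 → ℝ} (h : Pos w) : IsMaxPosTuple G6 w :=
  ⟨h, fun w' h' => by have := dom_le (dom_of_posDef w' h'); omega⟩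

theorem orient_iff {g : Matrix (Fin 6) (Fin 6) ℤ} (hg : Isom (g.map (Int.cast : ℤ → ℝ))) :
    OrientPres G6 g ↔ OP (g.map (Int.cast : ℤ → ℝ)) := by
  have key : ∀ u, Pos u → (0 < (Matrix.of fun i j : Fin 3 =>
          bilinR G6 (u i) ((g.map (Int.cast : ℤ → ℝ)) *ᵥ u j)).det ↔
          0 < dP u * dP (act (g.map (Int.cast : ℤ → ℝ)) u)) := by
    intro u hu
    have := pos_pos hu (hg.pos hu)
    constructor
    · intro h
      exact pos_of_mul_pos_left this h.le
    · intro h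
      exact pos_of_mul_pos_right this h.le
  constructor
  · intro h u hu
    exact (key u hu).1 (h 3 u (pos_max hu))
  · intro h k w hw
    obtain rfl := max_eq hw
    exact (key w hw.1).2 (h w hw.1)

/-! ### Part C: the image is contained in SO⁺ -/

structure Good (g : Matrix (Fin 6) (Fin 6) ℝ) : Prop where
  isom : Isom g
  det : g.det = 1
  op : OP g

theorem Good.mul {g h : Matrix (Fin 6) (Fin 6) ℝ} (hg : Good g) (hh : Good h) : Good (g * h) :=
  ⟨hg.isom.mul hh.isom, by rw [Matrix.det_mul, hg.det, hh.det, one_mul], OP_mul hh.isom hg.op hh.op⟩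

theorem lamR_Isom {A : Matrix (Fin 4) (Fin 4) ℝ} (h : A.det = 1) : Isom (lamR A) := by
  unfold Isom
  rw [lamR_isom, h, one_smul]

theorem Good.transvec (t : Matrix.TransvectionStruct (Fin 4) ℝ) : Good (lamR t.toMatrix) := by
  obtain ⟨i, j, hij, c⟩ := t
  have h1 : (Matrix.transvection i j (c/2)).det = 1 := Matrix.det_transvection_of_ne i j hij _
  have h2 : Matrix.transvection i j c = Matrix.transvection i j (c/2) * Matrix.transvection i j (c/2) := by
    rw [Matrix.transvection_mul_transvection_same _ _ hij, add_halves]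
  have h3 := lamR_Isom h1
  simp only [Matrix.TransvectionStruct.toMatrix]
  rw [h2, lamR_mul]
  exact ⟨h3.mul h3, by rw [Matrix.det_mul]; exact det_isom h3, OP_sq h3⟩

theorem Good.one : Good 1 := by
  have h : Isom 1 := by simp [Isom]
  exact ⟨h, Matrix.det_one, by simpa using OP_sq h⟩

theorem Good.list (L : List (Matrix.TransvectionStruct (Fin 4) ℝ)) :
    Good (lamR (L.map Matrix.TransvectionStruct.toMatrix).prod) := by
  induction L with
  | nil => simpa [lamR_one] using Good.one
  | cons t L ih =>
    simp only [List.map_cons, List.prod_cons, lamR_mul]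
    exact (Good.transvec t).mul ih

theorem lamR_diag (D : Fin 4 → ℝ) : lamR (Matrix.diagonal D) =
    Matrix.diagonal ![D 0 * D 1, D 0 * D 2, D 0 * D 3, D 1 * D 2, D 1 * D 3, D 2 * D 3] := by
  ext I J
  fin_cases I <;> fin_cases J <;> simp [lamR, pfst, psnd, Matrix.diagonal]

theorem dP_w0 : dP w0 = 8 := by
  simp [dP, Pm, pp, w0, Matrix.det_fin_three]
  norm_num

theorem dP_diag (d : Fin 6 → ℝ) : dP (act (Matrix.diagonal d) w0) =
    (d 0 + d 5) * (d 1 + d 4) * (d 2 + d 3) := by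
  simp [dP, Pm, pp, w0, act, Matrix.det_fin_three, Matrix.mulVec_diagonal]

theorem Good.diag (D : Fin 4 → ℝ) (h : (Matrix.diagonal D).det = 1) :
    Good (lamR (Matrix.diagonal D)) := by
  have hI := lamR_Isom h
  rw [Matrix.det_diagonal, Fin.prod_univ_four] at h
  refine ⟨hI, ?_, OP_of hI w0_pos ?_⟩
  · rw [lamR_diag, Matrix.det_diagonal, Fin.prod_univ_six]
    simp only [Matrix.cons_val]
    calc _ = (D 0 * D 1 * D 2 * D 3)^3 := by ring
      _ = 1 := by rw [h]; norm_num
  · rw [lamR_diag, dP_diag, dP_w0]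
    simp only [Matrix.cons_val]
    have h0 : D 0 ≠ 0 := by rintro h0; simp [h0] at h
    have key : (D 0 * D 1 + D 2 * D 3) * (D 0 * D 2 + D 1 * D 3) * (D 0 * D 3 + D 1 * D 2) * (D 0)^2
      = ((D 0 * D 1)^2 + 1) * ((D 0 * D 2)^2 + 1) * ((D 0 * D 3)^2 + 1) := by
      have e1 : (D 0 * D 1)^2 + 1 = D 0 * D 1 * (D 0 * D 1 + D 2 * D 3) := by rw [← h]; ring
      have e2 : (D 0 * D 2)^2 + 1 = D 0 * D 2 * (D 0 * D 2 + D 1 * D 3) := by rw [← h]; ring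
      have e3 : (D 0 * D 3)^2 + 1 = D 0 * D 3 * (D 0 * D 3 + D 1 * D 2) := by rw [← h]; ring
      rw [e1, e2, e3]
      calc _ = (D 0 * D 1 + D 2 * D 3) * (D 0 * D 2 + D 1 * D 3) * (D 0 * D 3 + D 1 * D 2)
              * (D 0)^2 * (D 0 * D 1 * D 2 * D 3) := by rw [h]; ring
        _ = _ := by ring
    have hp : 0 < (D 0 * D 1 + D 2 * D 3) * (D 0 * D 2 + D 1 * D 3) * (D 0 * D 3 + D 1 * D 2) := by
      have : 0 < (D 0 * D 1 + D 2 * D 3) * (D 0 * D 2 + D 1 * D 3) * (D 0 * D 3 + D 1 * D 2) * (D 0)^2 := by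
        rw [key]; positivity
      exact pos_of_mul_pos_left this (sq_nonneg _)
    linarith

theorem Good.lam {A : Matrix (Fin 4) (Fin 4) ℝ} (h : A.det = 1) : Good (lamR A) := by
  obtain ⟨L, L', D, hA⟩ := Matrix.Pivot.exists_list_transvec_mul_diagonal_mul_list_transvec A
  have hd : (Matrix.diagonal D).det = 1 := by
    rw [hA] at h
    simpa only [Matrix.det_mul, Matrix.TransvectionStruct.det_toMatrix_prod, one_mul, mul_one] using h
  rw [hA, lamR_mul, lamR_mul]
  exact ((Good.list L).mul (Good.diag D hd)).mul (Good.list L')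

theorem lam2_map (ψ : Matrix (Fin 4) (Fin 4) ℤ) :
    (lam2 ψ).map (Int.cast : ℤ → ℝ) = lamR (ψ.map (Int.cast : ℤ → ℝ)) := by
  ext I J
  simp [lam2, lamR]

theorem isom_map {g : Matrix (Fin 6) (Fin 6) ℤ} (h : IsIsometry G6 g) :
    Isom (g.map (Int.cast : ℤ → ℝ)) := by
  have := congrArg (fun M : Matrix (Fin 6) (Fin 6) ℤ => M.map (Int.castRingHom ℝ)) h
  simp only [Matrix.map_mul, ← Matrix.transpose_map] at this
  exact this

theorem map_det {n : ℕ} (g : Matrix (Fin n) (Fin n) ℤ) :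
    (g.map (Int.cast : ℤ → ℝ)).det = (g.det : ℝ) := (Int.cast_det g).symm

theorem good_lam2 {ψ : Matrix (Fin 4) (Fin 4) ℤ} (h : ψ.det = 1) :
    Good ((lam2 ψ).map (Int.cast : ℤ → ℝ)) := by
  rw [lam2_map]
  exact Good.lam (by rw [map_det, h, Int.cast_one])

theorem lam2_isom {ψ : Matrix (Fin 4) (Fin 4) ℤ} (h : ψ.det = 1) : IsIsometry G6 (lam2 ψ) := by
  have := lamR_isom ψ
  rw [h, one_smul] at this
  have e : GR ℤ = G6 := by ext; simp [GR]
  rw [e] at this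
  exact this

theorem dir1 {ψ : Matrix (Fin 4) (Fin 4) ℤ} (h : ψ.det = 1) :
    IsIsometry G6 (lam2 ψ) ∧ (lam2 ψ).det = 1 ∧ OrientPres G6 (lam2 ψ) := by
  have hg := good_lam2 h
  refine ⟨lam2_isom h, ?_, (orient_iff hg.isom).2 hg.op⟩
  have := hg.det
  rw [map_det] at this
  exact_mod_cast this

/-! ### Part D: reduction of an isometry by the image of SL₄(ℤ) -/

abbrev V6 := Fin 6 → ℤ

def bZ (x y : V6) : ℤ := x ⬝ᵥ (G6 *ᵥ y)

theorem bZ_eq (x y : V6) : bZ x y =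
    x 0 * y 5 + x 5 * y 0 - x 1 * y 4 - x 4 * y 1 + x 2 * y 3 + x 3 * y 2 := by
  simp [bZ, G6, dotProduct, Matrix.mulVec, Fin.sum_univ_six]
  ring

theorem iso_bZ {g : Matrix (Fin 6) (Fin 6) ℤ} (hg : IsIsometry G6 g) (x y : V6) :
    bZ (g *ᵥ x) (g *ᵥ y) = bZ x y := by
  unfold bZ
  conv_rhs => rw [← hg]
  rw [dotProduct_comm (g *ᵥ x), Matrix.dotProduct_mulVec, ← Matrix.mulVec_transpose,
    dotProduct_comm]
  simp only [Matrix.mulVec_mulVec, Matrix.mul_assoc]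

theorem lam2_mul (A B : Matrix (Fin 4) (Fin 4) ℤ) : lam2 (A * B) = lam2 A * lam2 B := lamR_mul A B

theorem lam2_one : lam2 1 = 1 := lamR_one

theorem iso_mul {g h : Matrix (Fin 6) (Fin 6) ℤ} (hg : IsIsometry G6 g) (hh : IsIsometry G6 h) :
    IsIsometry G6 (g * h) := by
  unfold IsIsometry at *
  rw [Matrix.transpose_mul]
  calc hᵀ * gᵀ * G6 * (g * h) = hᵀ * (gᵀ * G6 * g) * h := by simp only [Matrix.mul_assoc]
    _ = _ := by rw [hg, hh]

def RF (F : Set V6) (x y : V6) : Prop :=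
  ∃ ψ : Matrix (Fin 4) (Fin 4) ℤ, ψ.det = 1 ∧ (∀ z ∈ F, lam2 ψ *ᵥ z = z) ∧ lam2 ψ *ᵥ x = y

theorem RF.trans {F : Set V6} {x y z : V6} (h1 : RF F x y) (h2 : RF F y z) : RF F x z := by
  obtain ⟨A, hA, hAF, hAx⟩ := h1
  obtain ⟨B, hB, hBF, hBx⟩ := h2
  refine ⟨B * A, by rw [Matrix.det_mul, hA, hB, one_mul], ?_, ?_⟩
  · intro z hz
    rw [lam2_mul, ← Matrix.mulVec_mulVec, hAF z hz, hBF z hz]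
  · rw [lam2_mul, ← Matrix.mulVec_mulVec, hAx, hBx]

theorem RF.mono {F F' : Set V6} (hF : F' ⊆ F) {x y : V6} (h : RF F x y) : RF F' x y := by
  obtain ⟨A, hA, hAF, hAx⟩ := h
  exact ⟨A, hA, fun z hz => hAF z (hF hz), hAx⟩

theorem RF.bZ {F : Set V6} {x y : V6} (h : RF F x y) : bZ y y = bZ x x := by
  obtain ⟨A, hA, hAF, hAx⟩ := h
  rw [← hAx, iso_bZ (lam2_isom hA)]

def F0 : Set V6 := ∅
def F2 : Set V6 := {![1,0,0,0,0,0], ![0,0,0,0,0,1]}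

theorem E23 (a b c d e f p q r s : ℤ) (h : p * s - q * r = 1) :
    RF F2 ![a,b,c,d,e,f] ![a, p*b+q*c, r*b+s*c, p*d+q*e, r*d+s*e, f] := by
  refine ⟨!![1,0,0,0;0,1,0,0;0,0,p,q;0,0,r,s], ?_, ?_, ?_⟩
  · rw [det4]; simp; linarith
  · intro z hz
    rcases hz with rfl | rfl <;> ext i <;> fin_cases i <;>
    simp [lam2, pfst, psnd, Matrix.mulVec, dotProduct, Fin.sum_univ_six]
    linarith
  · ext i
    fin_cases i <;> simp [lam2, pfst, psnd, Matrix.mulVec, dotProduct, Fin.sum_univ_six]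
    linear_combination f * h

theorem E01 (a b c d e f p q r s : ℤ) (h : p * s - q * r = 1) :
    RF F2 ![a,b,c,d,e,f] ![a, p*b+q*d, p*c+q*e, r*b+s*d, r*c+s*e, f] := by
  refine ⟨!![p,q,0,0;r,s,0,0;0,0,1,0;0,0,0,1], ?_, ?_, ?_⟩
  · rw [det4]; simp; linarith
  · intro z hz
    rcases hz with rfl | rfl <;> ext i <;> fin_cases i <;>
    simp [lam2, pfst, psnd, Matrix.mulVec, dotProduct, Fin.sum_univ_six]
    linarith
  · ext i
    fin_cases i <;> simp [lam2, pfst, psnd, Matrix.mulVec, dotProduct, Fin.sum_univ_six]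
    linear_combination a * h

theorem E12 (a b c d e f p q r s : ℤ) (h : p * s - q * r = 1) :
    RF F0 ![a,b,c,d,e,f] ![p*a+q*b, r*a+s*b, c, d, p*e+q*f, r*e+s*f] := by
  refine ⟨!![1,0,0,0;0,p,q,0;0,r,s,0;0,0,0,1], ?_, ?_, ?_⟩
  · rw [det4]; simp; linarith
  · intro z hz
    exact absurd hz (Set.notMem_empty _)
  · ext i
    fin_cases i <;> simp [lam2, pfst, psnd, Matrix.mulVec, dotProduct, Fin.sum_univ_six]
    linear_combination d * h

theorem kill (a b : ℤ) : ∃ p q r s : ℤ, p * s - q * r = 1 ∧ r * a + s * b = 0 := by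
  by_cases h : Int.gcd a b = 0
  · rw [Int.gcd_eq_zero_iff] at h
    exact ⟨1, 0, 0, 1, by norm_num, by simp [h.1, h.2]⟩
  · obtain ⟨a', ha⟩ := Int.gcd_dvd_left (a := a) (b := b)
    obtain ⟨b', hb⟩ := Int.gcd_dvd_right (a := a) (b := b)
    have hz := Int.gcd_eq_gcd_ab a b
    set g : ℤ := (Int.gcd a b : ℤ) with hg
    have hg0 : g ≠ 0 := by rw [hg]; exact Int.natCast_ne_zero.mpr h
    set u := Int.gcdA a b
    set v := Int.gcdB a b
    refine ⟨u, v, -b', a', ?_, ?_⟩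
    · apply mul_left_cancel₀ hg0
      linear_combination (-u) * ha - v * hb - hz
    · linear_combination (-b') * ha + a' * hb

theorem F02 : F0 ⊆ F2 := Set.empty_subset _

theorem v6 (x : V6) : x = ![x 0, x 1, x 2, x 3, x 4, x 5] := by
  ext i; fin_cases i <;> rfl

theorem K23a (a b c d e f : ℤ) : ∃ b' d' e' : ℤ,
    RF F2 ![a,b,c,d,e,f] ![a,b',0,d',e',f] := by
  obtain ⟨p, q, r, s, h, h0⟩ := kill b c
  have := E23 a b c d e f p q r s h
  rw [h0] at this
  exact ⟨_, _, _, this⟩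

theorem K23b (a d e f : ℤ) : ∃ d' : ℤ, RF F2 ![a,0,0,d,e,f] ![a,0,0,d',0,f] := by
  obtain ⟨p, q, r, s, h, h0⟩ := kill d e
  have := E23 a 0 0 d e f p q r s h
  rw [h0] at this
  simp only [mul_zero, add_zero] at this
  exact ⟨_, this⟩

theorem K12 (a b d e f : ℤ) : ∃ a' e' f' : ℤ, RF F0 ![a,b,0,d,e,f] ![a',0,0,d,e',f'] := by
  obtain ⟨p, q, r, s, h, h0⟩ := kill a b
  have := E12 a b 0 d e f p q r s h
  rw [h0] at this
  exact ⟨_, _, _, this⟩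

theorem K01 (b d : ℤ) : ∃ b' : ℤ, RF F2 ![0,b,0,d,0,0] ![0,b',0,0,0,0] := by
  obtain ⟨p, q, r, s, h, h0⟩ := kill b d
  have := E01 0 b 0 d 0 0 p q r s h
  rw [h0] at this
  simp only [mul_zero, add_zero] at this
  exact ⟨_, this⟩

theorem S12 (a b d e f : ℤ) : RF F0 ![a,b,0,d,e,f] ![b,-a,0,d,f,-e] := by
  simpa using E12 a b 0 d e f 0 1 (-1) 0 (by norm_num)

theorem R1 (x : V6) (hx : bZ x x = 0) : ∃ h : ℤ, RF F0 x ![h,0,0,0,0,0] := by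
  rw [v6 x] at hx ⊢
  obtain ⟨b, d, e, h1⟩ := K23a (x 0) (x 1) (x 2) (x 3) (x 4) (x 5)
  obtain ⟨a, e, f, h2⟩ := K12 (x 0) b d e (x 5)
  have h12 := (h1.mono F02).trans h2
  have hb := h12.bZ
  rw [hx, bZ_eq] at hb
  simp at hb
  have hb' : a = 0 ∨ f = 0 := by
    rw [← mul_eq_zero]; linarith
  rcases hb' with rfl | rfl
  · obtain ⟨d1, h3⟩ := K23b 0 d e f
    have h4 := S12 0 0 d1 0 f
    simp only [neg_zero] at h4
    obtain ⟨d2, h5⟩ := K23b 0 d1 f 0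
    obtain ⟨b2, h6⟩ := K01 0 d2
    have h7 := S12 0 b2 0 0 0
    simp only [neg_zero] at h7
    exact ⟨_, h12.trans <| (h3.mono F02).trans <| h4.trans <| (h5.mono F02).trans <|
      (h6.mono F02).trans h7⟩
  · obtain ⟨d1, h3⟩ := K23b a d e 0
    have h4 := S12 a 0 d1 0 0
    simp only [neg_zero] at h4
    obtain ⟨b2, h6⟩ := K01 (-a) d1
    have h7 := S12 0 b2 0 0 0
    simp only [neg_zero] at h7
    exact ⟨_, h12.trans <| (h3.mono F02).trans <| h4.trans <| (h6.mono F02).trans h7⟩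

theorem R3 (x : V6) (hx : bZ x x = 0) (x0 : x 0 = 0) (x5 : x 5 = 0) :
    ∃ h : ℤ, RF F2 x ![0,h,0,0,0,0] := by
  rw [v6 x] at hx ⊢
  rw [x0, x5] at hx ⊢
  obtain ⟨b, d, e, h1⟩ := K23a 0 (x 1) (x 2) (x 3) (x 4) 0
  have hb := h1.bZ
  rw [hx, bZ_eq] at hb
  simp at hb
  have hb' : b = 0 ∨ e = 0 := by
    rw [← mul_eq_zero]; linarith
  rcases hb' with rfl | rfl
  · obtain ⟨d1, h3⟩ := K23b 0 d e 0
    obtain ⟨b2, h4⟩ := K01 0 d1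
    exact ⟨_, h1.trans <| h3.trans h4⟩
  · obtain ⟨b2, h4⟩ := K01 b d
    exact ⟨_, h1.trans h4⟩

/-- `g'` is obtained from `g` by multiplying with the image of SL₄ -/
def Red (g g' : Matrix (Fin 6) (Fin 6) ℤ) : Prop :=
  ∃ ψ : Matrix (Fin 4) (Fin 4) ℤ, ψ.det = 1 ∧ lam2 ψ * g = g'

theorem Red.trans {a b c : Matrix (Fin 6) (Fin 6) ℤ} (h1 : Red a b) (h2 : Red b c) : Red a c := by
  obtain ⟨A, hA, rfl⟩ := h1
  obtain ⟨B, hB, rfl⟩ := h2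
  exact ⟨B * A, by rw [Matrix.det_mul, hA, hB, one_mul], by rw [lam2_mul, Matrix.mul_assoc]⟩

theorem Red.iso {a b : Matrix (Fin 6) (Fin 6) ℤ} (h1 : Red a b) (h : IsIsometry G6 a) :
    IsIsometry G6 b := by
  obtain ⟨A, hA, rfl⟩ := h1
  exact iso_mul (lam2_isom hA) h

theorem red_of {g : Matrix (Fin 6) (Fin 6) ℤ} {F : Set V6} (hF : ∀ z ∈ F, g *ᵥ z = z) {v y : V6}
    (h : RF F (g *ᵥ v) y) : ∃ g', Red g g' ∧ (∀ z ∈ F, g' *ᵥ z = z) ∧ g' *ᵥ v = y := by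
  obtain ⟨A, hA, hAF, hAx⟩ := h
  refine ⟨_, ⟨A, hA, rfl⟩, ?_, ?_⟩
  · intro z hz
    rw [← Matrix.mulVec_mulVec, hF z hz, hAF z hz]
  · rw [← Matrix.mulVec_mulVec, hAx]

theorem step1 {g : Matrix (Fin 6) (Fin 6) ℤ} (hg : IsIsometry G6 g) :
    ∃ g', Red g g' ∧ g' *ᵥ ![1,0,0,0,0,0] = ![1,0,0,0,0,0] := by
  have h0 : bZ (g *ᵥ ![1,0,0,0,0,0]) (g *ᵥ ![1,0,0,0,0,0]) = 0 := by
    rw [iso_bZ hg, bZ_eq]; simp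
  obtain ⟨h, hR⟩ := R1 _ h0
  obtain ⟨g', hr, -, hv⟩ := red_of (F := F0) (fun z hz => absurd hz (Set.notMem_empty _)) hR
  have h1 := iso_bZ (hr.iso hg) ![1,0,0,0,0,0] ![0,0,0,0,0,1]
  rw [hv, bZ_eq, bZ_eq] at h1
  simp at h1
  rcases Int.eq_one_or_neg_one_of_mul_eq_one h1 with rfl | rfl
  · exact ⟨g', hr, hv⟩
  · have h2 := E12 (-1) 0 0 0 0 0 (-1) 0 0 (-1) (by norm_num)
    simp at h2
    rw [← hv] at h2
    obtain ⟨g'', hr', -, hv'⟩ := red_of (fun z hz => absurd hz (Set.notMem_empty _)) h2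
    exact ⟨g'', hr.trans hr', hv'⟩

theorem step2 {g : Matrix (Fin 6) (Fin 6) ℤ} (hg : IsIsometry G6 g)
    (g0 : g *ᵥ ![1,0,0,0,0,0] = ![1,0,0,0,0,0]) :
    ∃ g', Red g g' ∧ ∀ z ∈ F2, g' *ᵥ z = z := by
  have h1 := iso_bZ hg ![1,0,0,0,0,0] ![0,0,0,0,0,1]
  have h2 := iso_bZ hg ![0,0,0,0,0,1] ![0,0,0,0,0,1]
  rw [g0] at h1
  set y := g *ᵥ ![0,0,0,0,0,1] with hy
  rw [bZ_eq, bZ_eq] at h1 h2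
  simp at h1 h2
  have hR : RF {![1,0,0,0,0,0]} y ![0,0,0,0,0,1] := by
    refine ⟨!![1,0,-y 2,y 1;0,1,-y 4,y 3;0,0,1,0;0,0,0,1], ?_, ?_, ?_⟩
    · rw [det4]; simp
    · rintro z rfl
      ext i; fin_cases i <;>
      simp [lam2, pfst, psnd, Matrix.mulVec, dotProduct, Fin.sum_univ_six]
    · ext i
      fin_cases i <;>
        simp [lam2, pfst, psnd, Matrix.mulVec, dotProduct, Fin.sum_univ_six, h1]
      rw [h1] at h2
      linarith
  obtain ⟨g', hr, hF, hv⟩ := red_of (by rintro z rfl; exact g0) hR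
  refine ⟨g', hr, ?_⟩
  rintro z (rfl | rfl)
  · exact hF _ rfl
  · exact hv

theorem step3 {g : Matrix (Fin 6) (Fin 6) ℤ} (hg : IsIsometry G6 g)
    (hF : ∀ z ∈ F2, g *ᵥ z = z) :
    ∃ g', Red g g' ∧ (∀ z ∈ F2, g' *ᵥ z = z) ∧ g' *ᵥ ![0,1,0,0,0,0] = ![0,1,0,0,0,0] := by
  have ha : g *ᵥ ![1,0,0,0,0,0] = ![1,0,0,0,0,0] := hF _ (Or.inl rfl)
  have hb : g *ᵥ ![0,0,0,0,0,1] = ![0,0,0,0,0,1] := hF _ (Or.inr rfl)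
  have h1 := iso_bZ hg ![1,0,0,0,0,0] ![0,1,0,0,0,0]
  have h2 := iso_bZ hg ![0,0,0,0,0,1] ![0,1,0,0,0,0]
  have h3 : bZ (g *ᵥ ![0,1,0,0,0,0]) (g *ᵥ ![0,1,0,0,0,0]) = 0 := by
    rw [iso_bZ hg, bZ_eq]; simp
  rw [ha, bZ_eq, bZ_eq] at h1
  rw [hb, bZ_eq, bZ_eq] at h2
  obtain ⟨h, hR⟩ := R3 _ h3 (by simpa using h2) (by simpa using h1)
  obtain ⟨g', hr, hF', hv⟩ := red_of hF hR
  have h1 := iso_bZ (hr.iso hg) ![0,1,0,0,0,0] ![0,0,0,0,1,0]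
  rw [hv, bZ_eq, bZ_eq] at h1
  simp at h1
  rcases Int.eq_one_or_neg_one_of_mul_eq_one h1 with rfl | rfl
  · exact ⟨g', hr, hF', hv⟩
  · have h2 := E01 0 (-1) 0 0 0 0 (-1) 0 0 (-1) (by norm_num)
    simp at h2
    rw [← hv] at h2
    obtain ⟨g'', hr', hF'', hv'⟩ := red_of hF' h2
    exact ⟨g'', hr.trans hr', hF'', hv'⟩

theorem step4 {g : Matrix (Fin 6) (Fin 6) ℤ} (hg : IsIsometry G6 g)
    (hF : ∀ z ∈ F2, g *ᵥ z = z) (hc : g *ᵥ ![0,1,0,0,0,0] = ![0,1,0,0,0,0]) :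
    ∃ g', Red g g' ∧ (∀ z ∈ F2, g' *ᵥ z = z) ∧ g' *ᵥ ![0,1,0,0,0,0] = ![0,1,0,0,0,0] ∧
      g' *ᵥ ![0,0,0,0,1,0] = ![0,0,0,0,1,0] := by
  have ha : g *ᵥ ![1,0,0,0,0,0] = ![1,0,0,0,0,0] := hF _ (Or.inl rfl)
  have hb : g *ᵥ ![0,0,0,0,0,1] = ![0,0,0,0,0,1] := hF _ (Or.inr rfl)
  have h1 := iso_bZ hg ![1,0,0,0,0,0] ![0,0,0,0,1,0]
  have h2 := iso_bZ hg ![0,0,0,0,0,1] ![0,0,0,0,1,0]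
  have h3 := iso_bZ hg ![0,1,0,0,0,0] ![0,0,0,0,1,0]
  have h4 := iso_bZ hg ![0,0,0,0,1,0] ![0,0,0,0,1,0]
  rw [ha] at h1
  rw [hb] at h2
  rw [hc] at h3
  set y := g *ᵥ ![0,0,0,0,1,0] with hy
  rw [bZ_eq, bZ_eq] at h1 h2 h3 h4
  simp at h1 h2 h3 h4
  have hR : RF (F2 ∪ {![0,1,0,0,0,0]}) y ![0,0,0,0,1,0] := by
    refine ⟨!![1,-y 2,0,0;0,1,0,0;0,0,1,-y 3;0,0,0,1], ?_, ?_, ?_⟩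
    · rw [det4]; simp
    · rintro z ((rfl | rfl) | rfl) <;>
      ext i <;> fin_cases i <;>
      simp [lam2, pfst, psnd, Matrix.mulVec, dotProduct, Fin.sum_univ_six]
    · ext i
      fin_cases i <;>
        simp [lam2, pfst, psnd, Matrix.mulVec, dotProduct, Fin.sum_univ_six, h1, h2, h3]
      rw [h1, h2, h3] at h4
      linarith
  obtain ⟨g', hr, hF', hv⟩ := red_of (F := F2 ∪ {![0,1,0,0,0,0]}) (by
    rintro z (hz | rfl)
    · exact hF z hz
    · exact hc) hR
  exact ⟨g', hr, fun z hz => hF' z (Or.inl hz), hF' _ (Or.inr rfl), hv⟩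

theorem step5 {g : Matrix (Fin 6) (Fin 6) ℤ} (hg : IsIsometry G6 g)
    (hF : ∀ z ∈ F2, g *ᵥ z = z) (hc : g *ᵥ ![0,1,0,0,0,0] = ![0,1,0,0,0,0])
    (hd : g *ᵥ ![0,0,0,0,1,0] = ![0,0,0,0,1,0]) :
    ∃ a b c d : ℤ, a * b = 0 ∧ c * d = 0 ∧ a * d + b * c = 1 ∧ g =
      !![1,0,0,0,0,0; 0,1,0,0,0,0; 0,0,a,c,0,0; 0,0,b,d,0,0; 0,0,0,0,1,0; 0,0,0,0,0,1] := by
  have ha : g *ᵥ ![1,0,0,0,0,0] = ![1,0,0,0,0,0] := hF _ (Or.inl rfl)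
  have hb : g *ᵥ ![0,0,0,0,0,1] = ![0,0,0,0,0,1] := hF _ (Or.inr rfl)
  have k1 : ∀ z, bZ ![1,0,0,0,0,0] (g *ᵥ z) = bZ ![1,0,0,0,0,0] z := fun z => by
    conv_lhs => rw [← ha]
    exact iso_bZ hg _ _
  have k2 : ∀ z, bZ ![0,0,0,0,0,1] (g *ᵥ z) = bZ ![0,0,0,0,0,1] z := fun z => by
    conv_lhs => rw [← hb]
    exact iso_bZ hg _ _
  have k3 : ∀ z, bZ ![0,1,0,0,0,0] (g *ᵥ z) = bZ ![0,1,0,0,0,0] z := fun z => by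
    conv_lhs => rw [← hc]
    exact iso_bZ hg _ _
  have k4 : ∀ z, bZ ![0,0,0,0,1,0] (g *ᵥ z) = bZ ![0,0,0,0,1,0] z := fun z => by
    conv_lhs => rw [← hd]
    exact iso_bZ hg _ _
  have col : ∀ (j : Fin 6) (i : Fin 6), (g *ᵥ Pi.single j 1) i = g i j := by
    intro j i; simp
  have e2 : (Pi.single 2 1 : V6) = ![0,0,1,0,0,0] := by ext i; fin_cases i <;> rfl
  have e3 : (Pi.single 3 1 : V6) = ![0,0,0,1,0,0] := by ext i; fin_cases i <;> rfl
  have c2 := col 2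
  have c3 := col 3
  rw [e2] at c2
  rw [e3] at c3
  have i22 := iso_bZ hg ![0,0,1,0,0,0] ![0,0,1,0,0,0]
  have i33 := iso_bZ hg ![0,0,0,1,0,0] ![0,0,0,1,0,0]
  have i23 := iso_bZ hg ![0,0,1,0,0,0] ![0,0,0,1,0,0]
  have a1 := k1 ![0,0,1,0,0,0]
  have a2 := k2 ![0,0,1,0,0,0]
  have a3 := k3 ![0,0,1,0,0,0]
  have a4 := k4 ![0,0,1,0,0,0]
  have b1 := k1 ![0,0,0,1,0,0]
  have b2 := k2 ![0,0,0,1,0,0]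
  have b3 := k3 ![0,0,0,1,0,0]
  have b4 := k4 ![0,0,0,1,0,0]
  simp only [bZ_eq, c2, c3] at i22 i33 i23 a1 a2 a3 a4 b1 b2 b3 b4
  simp at i22 i33 i23 a1 a2 a3 a4 b1 b2 b3 b4
  simp only [a1, a2, a3, a4, b1, b2, b3, b4] at i22 i33 i23
  refine ⟨g 2 2, g 3 2, g 2 3, g 3 3, by linarith, by linarith, by linarith, ?_⟩
  have ca := fun i => congrFun ha i
  have cb := fun i => congrFun hb i
  have cc := fun i => congrFun hc i
  have cd := fun i => congrFun hd i
  simp [Matrix.mulVec, dotProduct, Fin.sum_univ_six] at ca cb cc cd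
  ext i j
  fin_cases j
  · fin_cases i <;> simp [ca]
  · fin_cases i <;> simp [cc]
  · fin_cases i <;> simp [a1, a2, a3, a4]
  · fin_cases i <;> simp [b1, b2, b3, b4]
  · fin_cases i <;> simp [cd]
  · fin_cases i <;> simp [cb]

theorem reduce {g : Matrix (Fin 6) (Fin 6) ℤ} (hg : IsIsometry G6 g) :
    ∃ a b c d : ℤ, a * b = 0 ∧ c * d = 0 ∧ a * d + b * c = 1 ∧ Red g
      !![1,0,0,0,0,0; 0,1,0,0,0,0; 0,0,a,c,0,0; 0,0,b,d,0,0; 0,0,0,0,1,0; 0,0,0,0,0,1] := by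
  obtain ⟨g1, r1, h1⟩ := step1 hg
  have i1 := r1.iso hg
  obtain ⟨g2, r2, h2⟩ := step2 i1 h1
  have i2 := r2.iso i1
  obtain ⟨g3, r3, h3, h3'⟩ := step3 i2 h2
  have i3 := r3.iso i2
  obtain ⟨g4, r4, h4, h4', h4''⟩ := step4 i3 h3 h3'
  obtain ⟨a, b, c, d, hab, hcd, h, rfl⟩ := step5 (r4.iso i3) h4 h4' h4''
  exact ⟨a, b, c, d, hab, hcd, h, r1.trans <| r2.trans <| r3.trans r4⟩

theorem det_block (a b c d : ℤ) : (!![1,0,0,0,0,0; 0,1,0,0,0,0; 0,0,a,c,0,0; 0,0,b,d,0,0;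
    0,0,0,0,1,0; 0,0,0,0,0,1] : Matrix (Fin 6) (Fin 6) ℤ).det = a * d - c * b := by
  simp [Matrix.det_succ_row_zero, Fin.sum_univ_succ, Fin.succAbove]
  ring

theorem dir2 {g : Matrix (Fin 6) (Fin 6) ℤ} (hg : IsIsometry G6 g) (hdet : g.det = 1)
    (ho : OrientPres G6 g) : ∃ ψ : Matrix (Fin 4) (Fin 4) ℤ, ψ.det = 1 ∧ g = lam2 ψ := by
  obtain ⟨a, b, c, d, hab, hcd, h1, ψ, hψ, hr⟩ := reduce hg
  have hgood : Good (g.map (Int.cast : ℤ → ℝ)) :=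
    ⟨isom_map hg, by rw [map_det, hdet, Int.cast_one], (orient_iff (isom_map hg)).1 ho⟩
  have hG := (good_lam2 hψ).mul hgood
  have hmap : ((lam2 ψ) * g).map (Int.cast : ℤ → ℝ) =
      (lam2 ψ).map (Int.cast : ℤ → ℝ) * g.map (Int.cast : ℤ → ℝ) :=
    Matrix.map_mul (f := Int.castRingHom ℝ)
  rw [← hmap, hr] at hG
  have hD := hG.det
  rw [map_det, det_block] at hD
  have hD' : a * d - c * b = 1 := by exact_mod_cast hD
  have had : a * d = 1 := by linarith
  have hbc : b * c = 0 := by linarith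
  have hb : b = 0 := by
    rcases mul_eq_zero.1 hab with h | h
    · simp [h] at had
    · exact h
  have hc : c = 0 := by
    rcases mul_eq_zero.1 hcd with h | h
    · exact h
    · simp [h] at had
  subst hb hc
  have hpos := hG.op w0 w0_pos
  rw [dP_w0] at hpos
  have hval : dP (act ((!![1,0,0,0,0,0; 0,1,0,0,0,0; 0,0,a,0,0,0; 0,0,0,d,0,0;
    0,0,0,0,1,0; 0,0,0,0,0,1] : Matrix (Fin 6) (Fin 6) ℤ).map (Int.cast : ℤ → ℝ)) w0) =
      4 * ((a:ℝ) + d) := by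
    simp [dP, Pm, pp, w0, act, Matrix.det_fin_three, Matrix.mulVec, dotProduct, Fin.sum_univ_six]
    left; norm_num
  rw [hval] at hpos
  rcases Int.eq_one_or_neg_one_of_mul_eq_one' had with ⟨rfl, rfl⟩ | ⟨rfl, rfl⟩
  · have hone : lam2 ψ * g = 1 := by
      rw [hr]
      ext i j
      fin_cases i <;> fin_cases j <;> rfl
    refine ⟨ψ.adjugate, by simp [Matrix.det_adjugate, hψ], ?_⟩
    have hinv : lam2 ψ.adjugate * lam2 ψ = 1 := by
      rw [← lam2_mul, Matrix.adjugate_mul, hψ, one_smul, lam2_one]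
    calc g = lam2 ψ.adjugate * lam2 ψ * g := by rw [hinv, one_mul]
      _ = _ := by rw [Matrix.mul_assoc, hone, mul_one]
  · norm_num at hpos

/-- The image of `SL₄(ℤ)` under the second exterior power homomorphism
`λ(ψ) = Λ²ψ` is exactly `SO⁺(Λ²ℤ⁴, b)`, where `b(x,y) = x ∧ y ∈ Λ⁴ℤ⁴ ≅ ℤ`. -/
theorem stmt_12 :
    {g : Matrix (Fin 6) (Fin 6) ℤ |
        ∃ ψ : Matrix (Fin 4) (Fin 4) ℤ, ψ.det = 1 ∧ g = lam2 ψ} =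
    {g : Matrix (Fin 6) (Fin 6) ℤ |
        IsIsometry G6 g ∧ g.det = 1 ∧ OrientPres G6 g} := by
  ext g
  constructor
  · rintro ⟨ψ, hψ, rfl⟩
    exact dir1 hψ
  · rintro ⟨h1, h2, h3⟩
    exact dir2 h1 h2 h3
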